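/- Let ε > 0, let Y > 0 be a real number, let Z > 0, and set X = Z·Y. Let L₁, L₂ be independent random variables with L₁, L₂ ~ Lap(2/ε), and set X̃ = X + L₁ and Ỹ = Y + L₂. Let α satisfy 0 < α < Z, and assume Z − α ≠ 1 and Z + α ≠ 1. Then P(X̃ ≤ (Z − α)·Ỹ) + P(X̃ ≥ (Z + α)·Ỹ) = (1/2 + 1/(2·((Z−α)² − 1)))·exp(−ε·α·Y/(2·(Z−α))) + (1/2 + 1/(2·((Z+α)² − 1)))·exp(−ε·α·Y/(2·(Z+α))) − ((Z² + α² − 1)/((Z² + α² − 1)² − 4·α²·Z²))·exp(−ε·α·Y/2). -/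

import Mathlib

open MeasureTheory ProbabilityTheory Filter

/-- The Laplace distribution on `ℝ` with location `μ` and scale `b`,
given by the density `x ↦ (1/(2b)) * exp (-|x - μ| / b)`. -/
noncomputable def laplaceMeasure (μ b : ℝ) : Measure ℝ :=
  MeasureTheory.volume.withDensity
    fun x => ENNReal.ofReal ((1 / (2 * b)) * Real.exp (-|x - μ| / b))

/-!
The noisy counts are Laplace variables centred at `Z * Y` and `Y`, so each event compares a
Laplace variable with a multiple of an independent one, and its probability is a tail of a
convolution `Lap(m, a) ∗ Lap(n, b)`. The characteristic function of `Lap(m, b)` at `t` is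
`exp (i m t) / (1 + b² t²)`, and partial fractions in `t²` turn the product of two of these into
`(a² φ_a - b² φ_b) / (a² - b²)`. The convolution is therefore a signed mixture of two Laplace
distributions with the same centre, whose tails are pure exponentials; this is where the exponents
with and without the factor `Z ∓ α` come from.
-/

variable {μ ν a b c : ℝ}

lemma integral_cexp_mul_sub_mul_abs {z : ℂ} (hz : |z.re| < a) :
    ∫ x : ℝ, Complex.exp (z * x - a * |x|) = 2 * a / (a ^ 2 - z ^ 2) := by
  obtain ⟨hz₁, hz₂⟩ := abs_lt.mp hz
  have hre₁ : 0 < (z + a).re := by simpa using by linarith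
  have hre₂ : (z - a).re < 0 := by simpa using hz₂
  have eqOn_Iic : Set.EqOn (fun x : ℝ ↦ Complex.exp (z * x - a * |x|))
      (fun x ↦ Complex.exp ((z + a) * x)) (Set.Iic 0) := fun x hx ↦ by
    simp only [abs_of_nonpos (Set.mem_Iic.mp hx)]
    push_cast
    ring_nf
  have eqOn_Ioi : Set.EqOn (fun x : ℝ ↦ Complex.exp (z * x - a * |x|))
      (fun x ↦ Complex.exp ((z - a) * x)) (Set.Ioi 0) := fun x hx ↦ by
    simp only [abs_of_pos (Set.mem_Ioi.mp hx)]
    ring_nf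
  rw [← intervalIntegral.integral_Iic_add_Ioi (b := 0)
      ((integrableOn_exp_mul_complex_Iic hre₁ 0).congr_fun eqOn_Iic.symm measurableSet_Iic)
      ((integrableOn_exp_mul_complex_Ioi hre₂ 0).congr_fun eqOn_Ioi.symm measurableSet_Ioi),
    setIntegral_congr_fun measurableSet_Iic eqOn_Iic,
    setIntegral_congr_fun measurableSet_Ioi eqOn_Ioi,
    integral_exp_mul_complex_Iic hre₁, integral_exp_mul_complex_Ioi hre₂]
  have hadd : z + a ≠ 0 := fun h ↦ by simp [h] at hre₁
  have hsub : z - a ≠ 0 := fun h ↦ by simp [h] at hre₂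
  have hsq : (a : ℂ) ^ 2 - z ^ 2 ≠ 0 := by
    rw [show (a : ℂ) ^ 2 - z ^ 2 = -((z + a) * (z - a)) by ring]
    exact neg_ne_zero.mpr (mul_ne_zero hadd hsub)
  simp only [Complex.ofReal_zero, mul_zero, Complex.exp_zero]
  field_simp
  ring

lemma setIntegral_laplaceMeasure {E : Type*} [NormedAddCommGroup E] [NormedSpace ℝ E]
    (hb : 0 ≤ b) (f : ℝ → E) {s : Set ℝ} (hs : MeasurableSet s) :
    ∫ x in s, f x ∂laplaceMeasure μ b =
      ∫ x in s, ((1 / (2 * b)) * Real.exp (-|x - μ| / b)) • f x := by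
  rw [laplaceMeasure,
    setIntegral_withDensity_eq_setIntegral_toReal_smul (by fun_prop) (by simp) _ hs]
  simp_rw [ENNReal.toReal_ofReal (show 0 ≤ (1 / (2 * b)) * Real.exp _ by positivity)]

lemma measureReal_laplaceMeasure_Iic (hb : 0 < b) {x : ℝ} (hx : x ≤ μ) :
    (laplaceMeasure μ b).real (Set.Iic x) = Real.exp ((x - μ) / b) / 2 := by
  have density_eq : Set.EqOn (fun y ↦ (1 / (2 * b)) * Real.exp (-|y - μ| / b))
      (fun y ↦ Real.exp (-μ / b) / (2 * b) * Real.exp (1 / b * y)) (Set.Iic x) := fun y hy ↦ by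
    simp only [abs_of_nonpos (sub_nonpos.mpr ((Set.mem_Iic.mp hy).trans hx))]
    rw [div_mul_eq_mul_div, div_mul_eq_mul_div, ← Real.exp_add]
    ring_nf
  calc (laplaceMeasure μ b).real (Set.Iic x)
      = ∫ y in Set.Iic x, (1 / (2 * b)) * Real.exp (-|y - μ| / b) := by
        simpa using setIntegral_laplaceMeasure (μ := μ) hb.le (fun _ ↦ (1 : ℝ))
          (measurableSet_Iic (a := x))
    _ = Real.exp (-μ / b) / (2 * b) * (Real.exp (1 / b * x) / (1 / b)) := by
        rw [setIntegral_congr_fun measurableSet_Iic density_eq, integral_const_mul,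
          integral_exp_mul_Iic (by positivity)]
    _ = Real.exp ((x - μ) / b) / 2 := by
        rw [show (x - μ) / b = -μ / b + 1 / b * x by ring, Real.exp_add]
        field_simp

lemma charFun_laplaceMeasure (hb : 0 < b) (t : ℝ) :
    charFun (laplaceMeasure μ b) t = Complex.exp (t * μ * Complex.I) / (1 + b ^ 2 * t ^ 2) := by
  have factor (x : ℝ) : ((1 / (2 * b)) * Real.exp (-|x + μ - μ| / b)) •
      Complex.exp (t * ↑(x + μ) * Complex.I) =
      Complex.exp (t * μ * Complex.I) / (2 * b) *
        Complex.exp (t * Complex.I * x - ↑(b⁻¹) * |x|) := by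
    rw [Complex.real_smul]
    push_cast
    rw [mul_assoc, div_mul_eq_mul_div, div_mul_eq_mul_div, ← Complex.exp_add, ← Complex.exp_add]
    ring_nf
  have hb' : (b : ℂ) ≠ 0 := by exact_mod_cast hb.ne'
  rw [charFun_apply_real, ← setIntegral_univ, setIntegral_laplaceMeasure hb.le _ .univ,
    setIntegral_univ, ← integral_add_right_eq_self _ μ]
  simp_rw [factor]
  rw [integral_const_mul, integral_cexp_mul_sub_mul_abs (by simpa using hb), mul_pow,
    Complex.I_sq]
  push_cast
  rw [show ((b : ℂ)⁻¹ ^ 2 - t ^ 2 * -1) = (1 + b ^ 2 * t ^ 2) / b ^ 2 by field_simp; ring]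
  field_simp

lemma isProbabilityMeasure_laplaceMeasure (hb : 0 < b) :
    IsProbabilityMeasure (laplaceMeasure μ b) := by
  have hreal : (laplaceMeasure μ b).real Set.univ = 1 := by
    rw [← Complex.ofReal_inj, ← charFun_zero, charFun_laplaceMeasure hb]
    simp
  exact ⟨by simpa [measureReal_def, ENNReal.toReal_eq_one_iff] using hreal⟩

lemma laplaceMeasure_map_const_add (hb : 0 < b) (c : ℝ) :
    (laplaceMeasure μ b).map (c + ·) = laplaceMeasure (c + μ) b := by
  have := isProbabilityMeasure_laplaceMeasure (μ := μ) hb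
  have := isProbabilityMeasure_laplaceMeasure (μ := c + μ) hb
  refine Measure.ext_of_charFun (funext fun t ↦ ?_)
  rw [charFun_map_const_add, charFun_laplaceMeasure hb, charFun_laplaceMeasure hb,
    div_mul_eq_mul_div, ← Complex.exp_add, Real.inner_apply]
  push_cast
  ring_nf

lemma laplaceMeasure_map_const_mul (hb : 0 < b) (hc : c ≠ 0) :
    (laplaceMeasure μ b).map (c * ·) = laplaceMeasure (c * μ) (|c| * b) := by
  have hcb : 0 < |c| * b := by positivity
  have := isProbabilityMeasure_laplaceMeasure (μ := μ) hb
  have := isProbabilityMeasure_laplaceMeasure (μ := c * μ) hcb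
  refine Measure.ext_of_charFun (funext fun t ↦ ?_)
  have sq_abs_c : ((|c| : ℝ) : ℂ) ^ 2 = (c : ℂ) ^ 2 := by exact_mod_cast sq_abs c
  rw [charFun_map_mul, charFun_laplaceMeasure hb, charFun_laplaceMeasure hcb]
  push_cast
  rw [mul_pow _ (b : ℂ), sq_abs_c]
  ring_nf

lemma charFun_add_measure {E : Type*} [NormedAddCommGroup E] [InnerProductSpace ℝ E]
    [MeasurableSpace E] [OpensMeasurableSpace E] (ρ σ : Measure E) [IsFiniteMeasure ρ]
    [IsFiniteMeasure σ] (t : E) :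
    charFun (ρ + σ) t = charFun ρ t + charFun σ t := by
  simp only [charFun_eq_integral_innerProbChar]
  exact integral_add_measure (BoundedContinuousFunction.integrable ρ _)
    (BoundedContinuousFunction.integrable σ _)

lemma charFun_nnreal_smul_measure {E : Type*} [Inner ℝ E] [MeasurableSpace E] (r : NNReal)
    (ρ : Measure E) (t : E) :
    charFun (r • ρ) t = r * charFun ρ t := by
  simp [charFun_apply, integral_smul_nnreal_measure, NNReal.smul_def]

-- This is `(a² - b²) • (Lap(μ, a) ∗ Lap(ν, b)) = a² • Lap(μ + ν, a) - b² • Lap(μ + ν, b)`, with the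
-- subtracted terms moved across so that both sides are measures whatever the order of `a` and `b`.
lemma smul_conv_add_smul_laplaceMeasure (ha : 0 < a) (hb : 0 < b) :
    (a ^ 2).toNNReal • (laplaceMeasure μ a ∗ laplaceMeasure ν b) +
        (b ^ 2).toNNReal • laplaceMeasure (μ + ν) b =
      (b ^ 2).toNNReal • (laplaceMeasure μ a ∗ laplaceMeasure ν b) +
        (a ^ 2).toNNReal • laplaceMeasure (μ + ν) a := by
  have := isProbabilityMeasure_laplaceMeasure (μ := μ) ha
  have := isProbabilityMeasure_laplaceMeasure (μ := ν) hb
  have := isProbabilityMeasure_laplaceMeasure (μ := μ + ν) ha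
  have := isProbabilityMeasure_laplaceMeasure (μ := μ + ν) hb
  refine Measure.ext_of_charFun (funext fun t ↦ ?_)
  have ha' : (1 + a ^ 2 * t ^ 2 : ℂ) ≠ 0 := by
    exact_mod_cast (by positivity : 1 + a ^ 2 * t ^ 2 ≠ 0)
  have hb' : (1 + b ^ 2 * t ^ 2 : ℂ) ≠ 0 := by
    exact_mod_cast (by positivity : 1 + b ^ 2 * t ^ 2 ≠ 0)
  have partial_fractions : (a ^ 2 / (1 + a ^ 2 * t ^ 2) - b ^ 2 / (1 + b ^ 2 * t ^ 2) : ℂ) =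
      (a ^ 2 - b ^ 2) / (1 + a ^ 2 * t ^ 2) / (1 + b ^ 2 * t ^ 2) := by
    rw [div_sub_div _ _ ha' hb', div_div]
    congr 1
    ring
  have exp_add : Complex.exp (t * ↑(μ + ν) * Complex.I) =
      Complex.exp (t * μ * Complex.I) * Complex.exp (t * ν * Complex.I) := by
    rw [← Complex.exp_add]
    push_cast
    ring_nf
  simp only [charFun_add_measure, charFun_nnreal_smul_measure, charFun_conv,
    charFun_laplaceMeasure ha, charFun_laplaceMeasure hb, Real.coe_toNNReal _ (sq_nonneg _),
    exp_add]
  push_cast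
  linear_combination
    -(Complex.exp (t * μ * Complex.I) * Complex.exp (t * ν * Complex.I)) * partial_fractions

lemma measureReal_laplaceMeasure_conv_laplaceMeasure (ha : 0 < a) (hb : 0 < b) (hab : a ≠ b)
    (s : Set ℝ) :
    (laplaceMeasure μ a ∗ laplaceMeasure ν b).real s =
      (a ^ 2 * (laplaceMeasure (μ + ν) a).real s - b ^ 2 * (laplaceMeasure (μ + ν) b).real s) /
        (a ^ 2 - b ^ 2) := by
  have := isProbabilityMeasure_laplaceMeasure (μ := μ) ha
  have := isProbabilityMeasure_laplaceMeasure (μ := ν) hb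
  have := isProbabilityMeasure_laplaceMeasure (μ := μ + ν) ha
  have := isProbabilityMeasure_laplaceMeasure (μ := μ + ν) hb
  have sq_sub_ne : a ^ 2 - b ^ 2 ≠ 0 :=
    sub_ne_zero.mpr fun h ↦ hab ((sq_eq_sq₀ ha.le hb.le).mp h)
  have mixture_eq := congrArg (Measure.real · s)
    (smul_conv_add_smul_laplaceMeasure (μ := μ) (ν := ν) ha hb)
  rw [measureReal_add_apply, measureReal_add_apply] at mixture_eq
  simp only [measureReal_nnreal_smul_apply, Real.coe_toNNReal _ (sq_nonneg _)] at mixture_eq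
  rw [eq_div_iff sq_sub_ne]
  linarith

lemma sq_sub_one_ne_zero (hc : 0 ≤ c) (hc1 : c ≠ 1) : c ^ 2 - 1 ≠ 0 :=
  sub_ne_zero.mpr ((pow_eq_one_iff_of_nonneg hc two_ne_zero).not.mpr hc1)

section Comparison

variable {Ω : Type*} [MeasurableSpace Ω] {P : Measure Ω} {X Y : Ω → ℝ}

lemma hasLaw_const_mul_laplaceMeasure (hb : 0 < b) (hc : c ≠ 0)
    (hX : HasLaw X (laplaceMeasure μ b) P) :
    HasLaw (fun ω ↦ c * X ω) (laplaceMeasure (c * μ) (|c| * b)) P :=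
  HasLaw.fun_comp ⟨by fun_prop, laplaceMeasure_map_const_mul hb hc⟩ hX

lemma hasLaw_neg_laplaceMeasure (hb : 0 < b) (hX : HasLaw X (laplaceMeasure μ b) P) :
    HasLaw (fun ω ↦ -X ω) (laplaceMeasure (-μ) b) P := by
  simpa using hasLaw_const_mul_laplaceMeasure hb (neg_ne_zero.mpr one_ne_zero) hX

lemma hasLaw_const_add_laplaceMeasure (hb : 0 < b) (hX : HasLaw X (laplaceMeasure μ b) P) (c : ℝ) :
    HasLaw (fun ω ↦ c + X ω) (laplaceMeasure (c + μ) b) P :=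
  HasLaw.fun_comp ⟨by fun_prop, laplaceMeasure_map_const_add hb c⟩ hX

lemma measureReal_le_const_mul_of_hasLaw_laplaceMeasure (ha : 0 < a) (hb : 0 < b) (hc : 0 < c)
    (hac : a ≠ c * b) (hμν : c * ν ≤ μ) (hX : HasLaw X (laplaceMeasure μ a) P)
    (hY : HasLaw Y (laplaceMeasure ν b) P) (hXY : IndepFun X Y P) :
    P.real {ω | X ω ≤ c * Y ω} =
      (a ^ 2 * Real.exp (-(μ - c * ν) / a) - (c * b) ^ 2 * Real.exp (-(μ - c * ν) / (c * b))) /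
        (2 * (a ^ 2 - (c * b) ^ 2)) := by
  have hcb : 0 < c * b := mul_pos hc hb
  have := isProbabilityMeasure_laplaceMeasure (μ := μ) ha
  have := isProbabilityMeasure_laplaceMeasure (μ := -c * ν) hcb
  have hcY : HasLaw (fun ω ↦ -c * Y ω) (laplaceMeasure (-c * ν) (c * b)) P := by
    simpa only [abs_neg, abs_of_pos hc] using
      hasLaw_const_mul_laplaceMeasure hb (neg_ne_zero.mpr hc.ne') hY
  have hsum : HasLaw (fun ω ↦ X ω + -c * Y ω)
      (laplaceMeasure μ a ∗ laplaceMeasure (-c * ν) (c * b)) P :=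
    IndepFun.hasLaw_fun_add hX hcY (hXY.comp measurable_id (measurable_const_mul (-c)))
  have hloc : 0 ≤ μ + -c * ν := by linarith
  calc P.real {ω | X ω ≤ c * Y ω}
      = P.real {ω | X ω + -c * Y ω ≤ 0} := by
        simp only [neg_mul, ← sub_eq_add_neg, sub_nonpos]
    _ = (laplaceMeasure μ a ∗ laplaceMeasure (-c * ν) (c * b)).real (Set.Iic 0) :=
        hsum.measureReal_eq measurableSet_Iic
    _ = _ := by
        rw [measureReal_laplaceMeasure_conv_laplaceMeasure ha hcb hac,
          measureReal_laplaceMeasure_Iic ha hloc, measureReal_laplaceMeasure_Iic hcb hloc,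
          show (0 : ℝ) - (μ + -c * ν) = -(μ - c * ν) by ring, mul_div_assoc',
          mul_div_assoc', ← sub_div, div_div]

lemma measureReal_le_const_mul_of_hasLaw_laplaceMeasure_of_eq_scale (hb : 0 < b) (hc : 0 < c)
    (hc1 : c ≠ 1) (hμν : c * ν ≤ μ) (hX : HasLaw X (laplaceMeasure μ b) P)
    (hY : HasLaw Y (laplaceMeasure ν b) P) (hXY : IndepFun X Y P) :
    P.real {ω | X ω ≤ c * Y ω} =
      (1 / 2 + 1 / (2 * (c ^ 2 - 1))) * Real.exp (-(μ - c * ν) / (c * b)) -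
        1 / (2 * (c ^ 2 - 1)) * Real.exp (-(μ - c * ν) / b) := by
  have hbc : b ≠ c * b := fun h ↦ hc1 ((mul_eq_right₀ hb.ne').mp h.symm)
  have hc2 : c ^ 2 - 1 ≠ 0 := sq_sub_one_ne_zero hc.le hc1
  have factor : b ^ 2 - (c * b) ^ 2 = -(b ^ 2 * (c ^ 2 - 1)) := by ring
  rw [measureReal_le_const_mul_of_hasLaw_laplaceMeasure hb hb hc hbc hμν hX hY hXY, factor]
  field_simp
  ring

lemma measureReal_const_mul_le_of_hasLaw_laplaceMeasure_of_eq_scale (hb : 0 < b) (hc : 0 < c)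
    (hc1 : c ≠ 1) (hμν : μ ≤ c * ν) (hX : HasLaw X (laplaceMeasure μ b) P)
    (hY : HasLaw Y (laplaceMeasure ν b) P) (hXY : IndepFun X Y P) :
    P.real {ω | c * Y ω ≤ X ω} =
      (1 / 2 + 1 / (2 * (c ^ 2 - 1))) * Real.exp (-(c * ν - μ) / (c * b)) -
        1 / (2 * (c ^ 2 - 1)) * Real.exp (-(c * ν - μ) / b) := by
  have hneg := measureReal_le_const_mul_of_hasLaw_laplaceMeasure_of_eq_scale hb hc hc1
    (by linarith : c * -ν ≤ -μ) (hasLaw_neg_laplaceMeasure hb hX) (hasLaw_neg_laplaceMeasure hb hY)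
    (hXY.comp measurable_neg measurable_neg)
  simpa only [mul_neg, neg_le_neg_iff, sub_neg_eq_add, neg_add_eq_sub] using hneg

end Comparison

lemma div_sq_sub_eq_add_one_div {z α : ℝ} (h₁ : (z - α) ^ 2 - 1 ≠ 0) (h₂ : (z + α) ^ 2 - 1 ≠ 0) :
    (z ^ 2 + α ^ 2 - 1) / ((z ^ 2 + α ^ 2 - 1) ^ 2 - 4 * α ^ 2 * z ^ 2) =
      1 / (2 * ((z - α) ^ 2 - 1)) + 1 / (2 * ((z + α) ^ 2 - 1)) := by
  rw [show (z ^ 2 + α ^ 2 - 1) ^ 2 - 4 * α ^ 2 * z ^ 2 =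
    ((z - α) ^ 2 - 1) * ((z + α) ^ 2 - 1) by ring]
  field_simp
  ring

/-- **Sample accuracy of the ratio of Laplace-noised counts.**  With `X = Z·Y`,
`X̃ = X + L₁`, `Ỹ = Y + L₂` where `L₁, L₂` are independent `Lap(2/ε)` noises, the failure
probability `P(X̃ ≤ (Z−α)Ỹ) + P(X̃ ≥ (Z+α)Ỹ)` has the stated closed form. -/
theorem laplaceNoisedCounts_sample_accuracy {Ω : Type*} [MeasurableSpace Ω]
    (P : Measure Ω) [IsProbabilityMeasure P]
    (ε Y Z α : ℝ) (hε : 0 < ε) (hY : 0 < Y) (hZ : 0 < Z)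
    (hα0 : 0 < α) (hαZ : α < Z) (h₁ : Z - α ≠ 1) (h₂ : Z + α ≠ 1)
    (L₁ L₂ : Ω → ℝ) (hm₁ : Measurable L₁) (hm₂ : Measurable L₂)
    (hindep : IndepFun L₁ L₂ P)
    (hL₁ : Measure.map L₁ P = laplaceMeasure 0 (2 / ε))
    (hL₂ : Measure.map L₂ P = laplaceMeasure 0 (2 / ε)) :
    (P {ω | Z * Y + L₁ ω ≤ (Z - α) * (Y + L₂ ω)}).toReal +
      (P {ω | (Z + α) * (Y + L₂ ω) ≤ Z * Y + L₁ ω}).toReal =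
      (1 / 2 + 1 / (2 * ((Z - α) ^ 2 - 1))) * Real.exp (-(ε * α * Y) / (2 * (Z - α))) +
        (1 / 2 + 1 / (2 * ((Z + α) ^ 2 - 1))) * Real.exp (-(ε * α * Y) / (2 * (Z + α))) -
        ((Z ^ 2 + α ^ 2 - 1) / ((Z ^ 2 + α ^ 2 - 1) ^ 2 - 4 * α ^ 2 * Z ^ 2)) *
          Real.exp (-(ε * α * Y) / 2) := by
  have hb : 0 < 2 / ε := by positivity
  have hc₁ : 0 < Z - α := sub_pos.mpr hαZ
  have hc₂ : 0 < Z + α := add_pos hZ hα0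
  have hαY : 0 < α * Y := mul_pos hα0 hY
  have hX : HasLaw (fun ω ↦ Z * Y + L₁ ω) (laplaceMeasure (Z * Y) (2 / ε)) P := by
    simpa using hasLaw_const_add_laplaceMeasure hb ⟨hm₁.aemeasurable, hL₁⟩ (Z * Y)
  have hY' : HasLaw (fun ω ↦ Y + L₂ ω) (laplaceMeasure Y (2 / ε)) P := by
    simpa using hasLaw_const_add_laplaceMeasure hb ⟨hm₂.aemeasurable, hL₂⟩ Y
  have hXY : IndepFun (fun ω ↦ Z * Y + L₁ ω) (fun ω ↦ Y + L₂ ω) P :=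
    hindep.comp (measurable_const_add (Z * Y)) (measurable_const_add Y)
  have lower := measureReal_le_const_mul_of_hasLaw_laplaceMeasure_of_eq_scale hb hc₁ h₁
    (by linarith) hX hY' hXY
  have upper := measureReal_const_mul_le_of_hasLaw_laplaceMeasure_of_eq_scale hb hc₂ h₂
    (by linarith) hX hY' hXY
  have scale (x : ℝ) : -(α * Y) / (x * (2 / ε)) = -(ε * α * Y) / (2 * x) := by field_simp
  have scale_one : -(α * Y) / (2 / ε) = -(ε * α * Y) / 2 := by simpa using scale 1
  rw [show Z * Y - (Z - α) * Y = α * Y by ring, scale, scale_one] at lower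
  rw [show (Z + α) * Y - Z * Y = α * Y by ring, scale, scale_one] at upper
  rw [← measureReal_def, ← measureReal_def, lower, upper, div_sq_sub_eq_add_one_div
    (sq_sub_one_ne_zero hc₁.le h₁) (sq_sub_one_ne_zero hc₂.le h₂)]
  ring
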